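/- For every nonempty theory O and every X-valued tree x⃗ of depth n, one minus the sequential soft falsifiability of O on x⃗ is at most √8 times the square root of one minus the sequential hard falsifiability: 1 − F_seq(O|x⃗) ≤ √8 · √(1 − G_seq(O|x⃗)). (This is the data-dependent form of the main theorem for sequential prediction.) -/

import Mathlib

/-!
The path `ω` and the labels `σ` are drawn independently, so the tree plays no role beyond the
set of labelings it realises: for every `ω`, the quantity `1 - 2 * risk` is the normalised
correlation of `σ` with some element of the lifted projection `A` (`exists_corr_eq`). Massart's
finite class argument (`mul_mean_le`) bounds the mean `a` of this correlation over uniform `σ` by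
`l * a ≤ log |A| / n + l ^ 2 / 2` for every real `l`. Taking `l = a` gives
`a ^ 2 ≤ 2 * log |A| / n = 2 * log 2 * (1 - G)`, and averaging over `ω` gives the theorem, since
`2 * log 2 ≤ 8`.
-/

open Finset

noncomputable section

/-- Signs: `true ↦ +1`, `false ↦ -1`. -/
def sgn (b : Bool) : ℝ := if b then 1 else -1

/-- The point of the tree `x` visited at time `t` along the path `ω`. -/
def node {X : Type*} {n : ℕ} (x : (t : Fin n) → (Fin t.val → Bool) → X)
    (ω : Fin n → Bool) (t : Fin n) : X :=
  x t fun s => ω ⟨s.val, s.isLt.trans t.isLt⟩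

/-- The lifted projection: labelings realized by `O` along some path of the tree `x`. -/
def qseq {X : Type*} {n : ℕ} (x : (t : Fin n) → (Fin t.val → Bool) → X)
    (O : Set (X → Bool)) : Set (Fin n → Bool) :=
  {v | ∃ f ∈ O, ∃ ω : Fin n → Bool, ∀ t, v t = f (node x ω t)}

/-- Risk of `O` on labels `σ` along the path `ω` of the tree `x`. -/
def seqRisk {X : Type*} {n : ℕ} (x : (t : Fin n) → (Fin t.val → Bool) → X)
    (O : Set (X → Bool)) (ω σ : Fin n → Bool) : ℝ :=
  sInf ((fun f => ((Finset.univ.filter fun t => f (node x ω t) ≠ σ t).card : ℝ) / n) '' O)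

/-- Sequential soft falsifiability of `O` on the tree `x`. -/
def softFseq {X : Type*} {n : ℕ} (x : (t : Fin n) → (Fin t.val → Bool) → X)
    (O : Set (X → Bool)) : ℝ :=
  2 / 4 ^ n * ∑ ω : Fin n → Bool, ∑ σ : Fin n → Bool, seqRisk x O ω σ

/-- Sequential hard falsifiability of `O` on the tree `x`. -/
def hardFseq {X : Type*} {n : ℕ} (x : (t : Fin n) → (Fin t.val → Bool) → X)
    (O : Set (X → Bool)) : ℝ :=
  1 - Real.logb 2 ((qseq x O).ncard) / n

/-- Sequential Rademacher complexity of `O` on the tree `x`. -/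
def rademSeq {X : Type*} {n : ℕ} (x : (t : Fin n) → (Fin t.val → Bool) → X)
    (O : Set (X → Bool)) : ℝ :=
  ((2 : ℝ) ^ n)⁻¹ * ∑ ζ : Fin n → Bool,
    sSup ((fun f => (n : ℝ)⁻¹ * ∑ t, sgn (ζ t) * sgn (f (node x ζ t))) '' O)

/-- `V` is a zero-cover of `O` on the tree `x`. -/
def IsZeroCover {X : Type*} {n : ℕ} (x : (t : Fin n) → (Fin t.val → Bool) → X)
    (O : Set (X → Bool)) (V : Set ((t : Fin n) → (Fin t.val → Bool) → Bool)) : Prop :=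
  ∀ f ∈ O, ∀ ω : Fin n → Bool, ∃ v ∈ V, ∀ t : Fin n, node v ω t = f (node x ω t)

/-- The sequential covering number: minimum cardinality of a zero-cover. -/
def coverSeq {X : Type*} {n : ℕ} (x : (t : Fin n) → (Fin t.val → Bool) → X)
    (O : Set (X → Bool)) : ℕ :=
  sInf {k : ℕ | ∃ V, IsZeroCover x O V ∧ V.Finite ∧ V.ncard = k}

/-- The (unnormalised) correlation `∑ t, v t * σ t` of two sign vectors. -/
def corr {n : ℕ} (v σ : Fin n → Bool) : ℝ := ∑ t, sgn (v t) * sgn (σ t)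

/-- The correlation counts agreements minus disagreements. -/
lemma corr_eq {n : ℕ} (v σ : Fin n → Bool) :
    corr v σ = n - 2 * ((univ.filter fun t => v t ≠ σ t).card : ℝ) := by
  have h : ∀ t, sgn (v t) * sgn (σ t) = 1 - 2 * (if v t ≠ σ t then (1 : ℝ) else 0) := by
    intro t
    cases v t <;> cases σ t <;> norm_num [sgn]
  simp only [corr, h, Finset.sum_sub_distrib, ← Finset.mul_sum, Finset.sum_boole]
  simp

/-- The moment generating function of the correlation with uniform signs: the exponential turns
the sum over coordinates into a product, and each coordinate contributes `2 cosh l`. -/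
lemma sum_exp_corr {n : ℕ} (v : Fin n → Bool) (l : ℝ) :
    ∑ σ : Fin n → Bool, Real.exp (l * corr v σ) = (2 * Real.cosh l) ^ n := by
  have h : ∀ t, ∑ b : Bool, Real.exp (l * (sgn (v t) * sgn b)) = 2 * Real.cosh l := by
    intro t
    rw [Real.cosh_eq]
    cases v t <;> simp [sgn] <;> ring
  simp only [corr, Finset.mul_sum, Real.exp_sum]
  have := Finset.prod_univ_sum (fun _ : Fin n => (univ : Finset Bool))
    (fun t b => Real.exp (l * (sgn (v t) * sgn b)))
  rw [Fintype.piFinset_univ] at this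
  rw [← this, Finset.prod_congr rfl fun t _ => h t]
  simp

/-- Exponential moment bound behind Massart's lemma: Jensen's inequality, a union bound over `A`,
and `cosh l ≤ exp (l ^ 2 / 2)`. Here `M σ` is the correlation of `σ` with any selected element of
`A`, in particular with a maximising one. -/
lemma mul_mean_le {n : ℕ} (A : Finset (Fin n → Bool)) (M : (Fin n → Bool) → ℝ)
    (hM : ∀ σ, ∃ v ∈ A, M σ = corr v σ) (l : ℝ) :
    l * (((2 : ℝ) ^ n)⁻¹ * ∑ σ, M σ) ≤ Real.log A.card + n * (l ^ 2 / 2) := by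
  have hA : (0 : ℝ) < A.card := by
    obtain ⟨v, hv, -⟩ := hM fun _ => true
    exact_mod_cast Finset.card_pos.2 ⟨v, hv⟩
  have hJ := convexOn_exp.map_sum_le (t := (univ : Finset (Fin n → Bool)))
    (w := fun _ => ((2 : ℝ) ^ n)⁻¹) (p := fun σ => l * M σ)
    (fun _ _ => by positivity) (by simp) (fun _ _ => Set.mem_univ _)
  simp only [smul_eq_mul, ← Finset.mul_sum] at hJ
  have hU : ∑ σ, Real.exp (l * M σ) ≤ A.card * (2 * Real.cosh l) ^ n := by
    calc ∑ σ, Real.exp (l * M σ) ≤ ∑ σ, ∑ v ∈ A, Real.exp (l * corr v σ) := by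
          refine Finset.sum_le_sum fun σ _ => ?_
          obtain ⟨v, hv, h⟩ := hM σ
          rw [h]
          exact Finset.single_le_sum (f := fun v => Real.exp (l * corr v σ))
            (fun _ _ => (Real.exp_pos _).le) hv
      _ = A.card * (2 * Real.cosh l) ^ n := by
          rw [Finset.sum_comm]
          simp [sum_exp_corr]
  have hC : Real.cosh l ^ n ≤ Real.exp (n * (l ^ 2 / 2)) := by
    rw [Real.exp_nat_mul]
    exact pow_le_pow_left₀ (Real.cosh_pos l).le (Real.cosh_le_exp_half_sq l) n
  rw [← Real.exp_le_exp, Real.exp_add, Real.exp_log hA]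
  calc Real.exp (l * (((2 : ℝ) ^ n)⁻¹ * ∑ σ, M σ))
      ≤ ((2 : ℝ) ^ n)⁻¹ * ∑ σ, Real.exp (l * M σ) := by
        rwa [mul_left_comm]
    _ ≤ ((2 : ℝ) ^ n)⁻¹ * (A.card * (2 * Real.cosh l) ^ n) := by gcongr
    _ = A.card * Real.cosh l ^ n := by
        rw [mul_pow]
        field_simp
    _ ≤ A.card * Real.exp (n * (l ^ 2 / 2)) := by gcongr

/-- The infimum defining the risk is attained, so `n * (1 - 2 * risk)` is the correlation of `σ`
with an element of the lifted projection. -/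
lemma exists_corr_eq {X : Type*} {n : ℕ} (hn : 1 ≤ n)
    (x : (t : Fin n) → (Fin t.val → Bool) → X) (O : Set (X → Bool))
    (hO : O.Nonempty) (ω σ : Fin n → Bool) :
    ∃ v ∈ qseq x O, n * (1 - 2 * seqRisk x O ω σ) = corr v σ := by
  have hfin : ((fun f : X → Bool =>
      ((univ.filter fun t => f (node x ω t) ≠ σ t).card : ℝ) / n) '' O).Finite := by
    refine (Set.finite_range fun v : Fin n → Bool =>
      ((univ.filter fun t => v t ≠ σ t).card : ℝ) / n).subset ?_
    rintro _ ⟨f, -, rfl⟩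
    exact ⟨fun t => f (node x ω t), rfl⟩
  obtain ⟨f, hf, h⟩ := (hO.image _).csInf_mem hfin
  refine ⟨fun t => f (node x ω t), ⟨f, hf, ω, fun _ => rfl⟩, ?_⟩
  have hn' : (n : ℝ) ≠ 0 := by positivity
  rw [seqRisk, ← h, corr_eq]
  field_simp

/-- Main theorem (SEQ), data-dependent form:
`1 − F_seq(O|x) ≤ √8·√(1 − G_seq(O|x))`. -/
theorem stmt_1 {X : Type*} (n : ℕ) (hn : 1 ≤ n)
    (x : (t : Fin n) → (Fin t.val → Bool) → X) (O : Set (X → Bool))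
    (hO : O.Nonempty) :
    1 - softFseq x O ≤ Real.sqrt 8 * Real.sqrt (1 - hardFseq x O) := by
  classical
  have hn' : (0 : ℝ) < n := by exact_mod_cast hn
  set A := (qseq x O).toFinite.toFinset with hA
  have hcard : (qseq x O).ncard = A.card := Set.ncard_eq_toFinset_card _ _
  have hApos : 1 ≤ A.card := by
    obtain ⟨v, hv, -⟩ := exists_corr_eq hn x O hO (fun _ => true) (fun _ => true)
    exact Finset.card_pos.2 ⟨v, by simpa [hA] using hv⟩
  have hL : 0 ≤ Real.log A.card := Real.log_nonneg (by exact_mod_cast hApos)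
  have hlog2 : 0 < Real.log 2 := Real.log_pos (by norm_num)
  have hpath : ∀ ω : Fin n → Bool,
      ((2 : ℝ) ^ n)⁻¹ * ∑ σ, (1 - 2 * seqRisk x O ω σ) ≤
        Real.sqrt 8 * Real.sqrt (1 - hardFseq x O) := by
    intro ω
    set a := ((2 : ℝ) ^ n)⁻¹ * ∑ σ, (1 - 2 * seqRisk x O ω σ) with ha
    have h := mul_mean_le A (fun σ => n * (1 - 2 * seqRisk x O ω σ)) (fun σ => by
      obtain ⟨v, hv, h⟩ := exists_corr_eq hn x O hO ω σ
      exact ⟨v, by simpa [hA] using hv, h⟩) a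
    -- the choice `l = a` needs no case split on whether the class `A` is a singleton
    rw [← Finset.mul_sum, mul_left_comm _ (n : ℝ), ← ha] at h
    rw [← Real.sqrt_mul (by norm_num)]
    refine Real.le_sqrt_of_sq_le ?_
    rw [hardFseq, hcard, sub_sub_cancel, Real.logb]
    have h1 : a ^ 2 ≤ 2 * (Real.log A.card / n) := by
      rw [← mul_div_assoc, le_div_iff₀ hn']
      nlinarith
    have h2 : Real.log A.card ≤ Real.log A.card / Real.log 2 :=
      le_div_self hL hlog2 (by linarith [Real.log_two_lt_d9])
    have h3 : Real.log A.card / n ≤ Real.log A.card / Real.log 2 / n := by gcongr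
    have h4 : 0 ≤ Real.log A.card / n := by positivity
    linarith
  have h4 : (4 : ℝ) ^ n = 2 ^ n * 2 ^ n := by rw [← mul_pow]; norm_num
  have hF : 1 - softFseq x O = ((2 : ℝ) ^ n)⁻¹ *
      ∑ ω : Fin n → Bool, ((2 : ℝ) ^ n)⁻¹ * ∑ σ, (1 - 2 * seqRisk x O ω σ) := by
    simp only [softFseq, ← Finset.mul_sum, Finset.sum_sub_distrib, h4]
    simp
    field_simp
  rw [hF]
  calc _ ≤ ((2 : ℝ) ^ n)⁻¹ *
        ∑ _ω : Fin n → Bool, Real.sqrt 8 * Real.sqrt (1 - hardFseq x O) := by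
        exact mul_le_mul_of_nonneg_left (Finset.sum_le_sum fun ω _ => hpath ω) (by positivity)
    _ = Real.sqrt 8 * Real.sqrt (1 - hardFseq x O) := by simp
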